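/- Let (Ω,Σ,μ) be a probability space, (X_n) a sequence of Banach spaces each having property (δS_μ), and 1 < r < ∞. Then X = ℓ^r(X_n) has property (δS_μ); that is, every relatively weakly compact subset of L¹(μ,X) is a δS-set. -/

import Mathlib

open MeasureTheory Filter Set ENNReal Pointwise

noncomputable section

def IsWeaklyCompact {X : Type*} [NormedAddCommGroup X] [NormedSpace ℝ X] (W : Set X) : Prop :=
  IsCompact (toWeakSpace ℝ X '' W)

def IsRelWeaklyCompact {X : Type*} [NormedAddCommGroup X] [NormedSpace ℝ X] (W : Set X) : Prop :=
  IsCompact (closure (toWeakSpace ℝ X '' W))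

variable {Ω : Type*} [MeasurableSpace Ω] {X : Type*} [NormedAddCommGroup X] [NormedSpace ℝ X]

/-- A set of functions in `L¹(μ,X)` is uniformly integrable if it is bounded and the integrals
of the norms over small sets are uniformly small. -/
def UnifIntegrableSet (μ : Measure Ω) (K : Set (Lp X 1 μ)) : Prop :=
  (∃ C : ℝ, ∀ f ∈ K, ‖f‖ ≤ C) ∧
  ∀ ε : ℝ, 0 < ε → ∃ δ : ℝ, 0 < δ ∧ ∀ f ∈ K, ∀ A : Set Ω, μ A ≤ ENNReal.ofReal δ →
    ∫ ω in A, ‖(f : Ω → X) ω‖ ∂μ ≤ ε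

/-- `K ⊆ L¹(μ,X)` is a δS-set if it is uniformly integrable and for every `δ > 0` there is a
weakly compact `W ⊆ X` with `μ (f ⁻¹' W) ≥ 1 - δ` for all `f ∈ K`. -/
def IsDeltaSSet (μ : Measure Ω) (K : Set (Lp X 1 μ)) : Prop :=
  UnifIntegrableSet μ K ∧
  ∀ δ : ℝ, 0 < δ → ∃ W : Set X, IsWeaklyCompact W ∧
    ∀ f ∈ K, 1 - ENNReal.ofReal δ ≤ μ ((f : Ω → X) ⁻¹' W)

/-- A Banach space `X` has property (δSμ) if every relatively weakly compact subset of
`L¹(μ,X)` is a δS-set. -/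
def DeltaSProp (μ : Measure Ω) (X : Type*) [NormedAddCommGroup X] [NormedSpace ℝ X] : Prop :=
  ∀ K : Set (Lp X 1 μ), IsRelWeaklyCompact K → IsDeltaSSet μ K

/- Relatively weakly compact sets in `L¹(μ, E)` are uniformly integrable for every `E`: if they were
not, norming functionals of restrictions to disjoint sets would map such a set to a relatively
weakly compact subset of `ℓ¹` whose coordinates do not tend to zero uniformly, against the Schur
property of `ℓ¹`.

For the weakly compact set, let `Wᵢ` absorb the `i`-th coordinates of all members of `K` up to
measure `εᵢ`, and let all of them have norm at most `R` up to measure `δ / 2`. The union bound then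
applies to `{x | (∀ i, x i ∈ Wᵢ) ∧ ‖x‖ ≤ R}`. This set is weakly compact by Tychonoff, because a
functional on `ℓʳ(Xᵢ)` with `1 < r < ∞` is determined, up to a small error on bounded sets, by
finitely many coordinates, so that the weak topology is coordinatewise there. -/

open scoped NNReal Topology lp

section WeakTopology

variable {E F : Type*} [NormedAddCommGroup E] [NormedSpace ℝ E]
  [NormedAddCommGroup F] [NormedSpace ℝ F]

lemma continuous_toWeakSpace_comp_iff {T : Type*} [TopologicalSpace T] {f : T → E} :
    Continuous (fun t => toWeakSpace ℝ E (f t)) ↔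
      ∀ φ : StrongDual ℝ E, Continuous fun t => φ (f t) :=
  ⟨fun hf φ => (WeakBilin.eval_continuous (topDualPairing ℝ E).flip φ).comp hf,
    fun hf => WeakBilin.continuous_of_continuous_eval _ hf⟩

lemma isClosed_toWeakSpace_image {s : Set E} (hc : IsClosed s) (hs : Convex ℝ s) :
    IsClosed (toWeakSpace ℝ E '' s) := by
  have hclosure := hs.toWeakSpace_closure ℝ
  rw [hc.closure_eq] at hclosure
  exact hclosure ▸ isClosed_closure

lemma IsWeaklyCompact.isClosed {W : Set E} (hW : IsWeaklyCompact W) : IsClosed W := by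
  rw [← preimage_image_eq W (toWeakSpace ℝ E).injective]
  exact (IsCompact.isClosed hW).preimage (toWeakSpaceCLM ℝ E).continuous

lemma IsRelWeaklyCompact.image {K : Set E} (hK : IsRelWeaklyCompact K) (T : E →L[ℝ] F) :
    IsRelWeaklyCompact (T '' K) := by
  refine (IsCompact.image hK (WeakSpace.map T).continuous).closure_of_subset ?_
  rintro _ ⟨_, ⟨x, hx, rfl⟩, rfl⟩
  exact mem_image_of_mem _ (subset_closure (mem_image_of_mem _ hx))

lemma IsRelWeaklyCompact.isBounded {K : Set E} (hK : IsRelWeaklyCompact K) :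
    Bornology.IsBounded K := by
  have hpointwise (φ : StrongDual ℝ E) :
      ∃ C, ∀ x : K, ‖NormedSpace.inclusionInDoubleDual ℝ E x φ‖ ≤ C := by
    have hcont : Continuous fun x : WeakSpace ℝ E => φ ((toWeakSpace ℝ E).symm x) :=
      continuous_toWeakSpace_comp_iff.1 continuous_id φ
    obtain ⟨C, hC⟩ := IsCompact.exists_bound_of_continuousOn hK hcont.continuousOn
    exact ⟨C, fun x => by simpa using hC _ (subset_closure (mem_image_of_mem _ x.2))⟩
  obtain ⟨C, hC⟩ := banach_steinhaus hpointwise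
  refine isBounded_iff_forall_norm_le.2 ⟨C, fun x hx => ?_⟩
  rw [← (NormedSpace.inclusionInDoubleDualLi ℝ).norm_map x]
  exact hC ⟨x, hx⟩

end WeakTopology

section LpSum

variable {ι : Type*} {E : ι → Type*} [∀ i, NormedAddCommGroup (E i)] {r : ℝ≥0∞}

lemma norm_add_rpow_of_disjoint_support (hr : 0 < r.toReal) {x y : lp E r}
    (hxy : ∀ i, x i = 0 ∨ y i = 0) :
    ‖x + y‖ ^ r.toReal = ‖x‖ ^ r.toReal + ‖y‖ ^ r.toReal := by
  refine (lp.hasSum_norm hr (x + y)).unique ?_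
  convert (lp.hasSum_norm hr x).add (lp.hasSum_norm hr y) using 2 with i
  rcases hxy i with h | h <;> simp [h, Real.zero_rpow hr.ne']

lemma lp_sum_single_apply [DecidableEq ι] (x : ∀ i, E i) (s : Finset ι) (i : ι) :
    (∑ j ∈ s, lp.single r j (x j)) i = if i ∈ s then x i else 0 := by
  simp only [lp.coeFn_sum, Finset.sum_apply, lp.coeFn_single, Finset.sum_pi_single]

lemma norm_sum_single_le [DecidableEq ι] (hr : 0 < r.toReal) (x : lp E r) (s : Finset ι) :
    ‖∑ i ∈ s, lp.single r i (x i)‖ ≤ ‖x‖ := by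
  rw [← Real.rpow_le_rpow_iff (lp.norm_nonneg' _) (lp.norm_nonneg' _) hr, lp.norm_sum_single hr]
  exact lp.sum_rpow_le_norm_rpow hr x s

lemma norm_sub_sum_single_le [DecidableEq ι] (hr : 0 < r.toReal) (x : lp E r) (s : Finset ι) :
    ‖x - ∑ i ∈ s, lp.single r i (x i)‖ ≤ ‖x‖ := by
  rw [← Real.rpow_le_rpow_iff (lp.norm_nonneg' _) (lp.norm_nonneg' _) hr,
    lp.norm_compl_sum_single hr]
  exact sub_le_self _ (by positivity)

lemma exists_coe_eq_and_norm_le_iff [DecidableEq ι] (hr : 0 < r.toReal) {x : ∀ i, E i} {C : ℝ} :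
    (∃ y : lp E r, ⇑y = x ∧ ‖y‖ ≤ C) ↔ ∀ s : Finset ι, ‖∑ i ∈ s, lp.single r i (x i)‖ ≤ C := by
  constructor
  · rintro ⟨y, rfl, hy⟩ s
    exact (norm_sum_single_le hr y s).trans hy
  · intro h
    have hC : 0 ≤ C := by simpa using h ∅
    have hsum (s : Finset ι) : ∑ i ∈ s, ‖x i‖ ^ r.toReal ≤ C ^ r.toReal := by
      rw [← lp.norm_sum_single hr]
      exact Real.rpow_le_rpow (lp.norm_nonneg' _) (h s) hr.le
    exact ⟨⟨x, memℓp_gen' hsum⟩, rfl, lp.norm_le_of_forall_sum_le hr hC hsum⟩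

variable [∀ i, NormedSpace ℝ (E i)] [Fact (1 ≤ r)]

lemma apply_le_of_disjoint_support (hr1 : 1 ≤ r.toReal) (φ : StrongDual ℝ (lp E r)) {x y : lp E r}
    (hx : ‖x‖ ≤ 1) (hxy : ∀ i, x i = 0 ∨ y i = 0) :
    φ y ≤ ‖φ‖ - φ x + ‖φ‖ * ‖y‖ ^ r.toReal := by
  have hr0 : 0 < r.toReal := zero_lt_one.trans_le hr1
  have hy : 0 ≤ ‖y‖ ^ r.toReal := by positivity
  have hnorm : ‖x + y‖ ≤ 1 + ‖y‖ ^ r.toReal := by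
    rw [← Real.rpow_le_rpow_iff (norm_nonneg _) (by positivity) hr0]
    calc ‖x + y‖ ^ r.toReal = ‖x‖ ^ r.toReal + ‖y‖ ^ r.toReal :=
          norm_add_rpow_of_disjoint_support hr0 hxy
      _ ≤ 1 + ‖y‖ ^ r.toReal := by gcongr; exact Real.rpow_le_one (norm_nonneg _) hx hr0.le
      _ ≤ (1 + ‖y‖ ^ r.toReal) ^ r.toReal := Real.self_le_rpow_of_one_le (by linarith) hr1
  calc φ y = φ (x + y) - φ x := by rw [map_add, add_sub_cancel_left]
    _ ≤ ‖φ‖ * (1 + ‖y‖ ^ r.toReal) - φ x := by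
      gcongr
      exact (le_abs_self _).trans (φ.le_opNorm_of_le hnorm)
    _ = ‖φ‖ - φ x + ‖φ‖ * ‖y‖ ^ r.toReal := by ring

lemma exists_finset_support_subset_and_lt_apply (hr : r ≠ ∞) (φ : StrongDual ℝ (lp E r)) {c : ℝ}
    (hc : c < ‖φ‖) :
    ∃ (s : Finset ι) (x : lp E r), (∀ i ∉ s, x i = 0) ∧ ‖x‖ ≤ 1 ∧ c < φ x := by
  classical
  have hr0 : 0 < r.toReal := ENNReal.toReal_pos (zero_lt_one.trans_le Fact.out).ne' hr
  obtain ⟨x, hx, hcx⟩ : ∃ x, ‖x‖ < 1 ∧ c < φ x := by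
    obtain ⟨x, hx, hcx⟩ := φ.exists_lt_apply_of_lt_opNorm hc
    rcases le_total 0 (φ x) with h | h
    · exact ⟨x, hx, by rwa [Real.norm_of_nonneg h] at hcx⟩
    · exact ⟨-x, by rwa [norm_neg], by rwa [Real.norm_of_nonpos h, ← map_neg] at hcx⟩
  obtain ⟨s, hs⟩ :=
    (((lp.hasSum_single hr x).mapL φ).eventually_const_lt hcx).exists
  refine ⟨s, ∑ i ∈ s, lp.single r i (x i), fun i hi => ?_,
    (norm_sum_single_le hr0 x s).trans hx.le, by rwa [map_sum]⟩
  rw [lp_sum_single_apply, if_neg hi]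

/- Perturb an almost norming vector of `φ` by a small multiple of a disjointly supported `y`: the
norm increases by `O(t ^ r) = o(t)` only, so `φ y` must be small. -/
lemma exists_finset_forall_norm_apply_le (hr1 : 1 < r) (hr : r ≠ ∞) (φ : StrongDual ℝ (lp E r))
    {ε : ℝ} (hε : 0 < ε) :
    ∃ s : Finset ι, ∀ y : lp E r, (∀ i ∈ s, y i = 0) → ‖φ y‖ ≤ ε * ‖y‖ := by
  have hr1' : 1 < r.toReal := by simpa using ENNReal.toReal_strict_mono hr hr1
  obtain ⟨t, ht0, ht⟩ : ∃ t > 0, ‖φ‖ * t ^ (r.toReal - 1) < ε / 2 := by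
    have hlim : Tendsto (fun t : ℝ => ‖φ‖ * t ^ (r.toReal - 1)) (𝓝[>] 0) (𝓝 0) := by
      refine Tendsto.mono_left ?_ nhdsWithin_le_nhds
      have := (Real.continuous_rpow_const (sub_pos.2 hr1').le).tendsto 0
      simpa [Real.zero_rpow (sub_pos.2 hr1').ne'] using this.const_mul ‖φ‖
    exact (eventually_mem_nhdsWithin.and (hlim.eventually_lt_const (half_pos hε))).exists
  obtain ⟨s, x, hxs, hx, hφx⟩ := exists_finset_support_subset_and_lt_apply hr φ
    (sub_lt_self ‖φ‖ (show 0 < t * (ε / 2) by positivity))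
  suffices hle : ∀ y : lp E r, (∀ i ∈ s, y i = 0) → φ y ≤ ε * ‖y‖ from
    ⟨s, fun y hy => abs_le'.2 ⟨hle y hy, by simpa using hle (-y) (by simpa using hy)⟩⟩
  intro y hy
  rcases eq_or_ne y 0 with rfl | hy0
  · simp
  have hynorm : 0 < ‖y‖ := norm_pos_iff.2 hy0
  have hdisj (i : ι) : x i = 0 ∨ ((t / ‖y‖) • y) i = 0 :=
    (em' (i ∈ s)).imp (hxs i) fun hi => by simp [hy i hi]
  have hnorm : ‖(t / ‖y‖) • y‖ = t := by
    rw [norm_smul, norm_div, norm_norm, Real.norm_of_nonneg ht0.le, div_mul_cancel₀ _ hynorm.ne']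
  have hpow : t ^ r.toReal = t * t ^ (r.toReal - 1) := by
    rw [← Real.rpow_one_add' ht0.le (by linarith), add_sub_cancel]
  have hφy := apply_le_of_disjoint_support hr1'.le φ hx hdisj
  rw [hnorm, hpow, map_smul, smul_eq_mul] at hφy
  have : t * (φ y / ‖y‖) < t * ε := by
    calc t * (φ y / ‖y‖) = t / ‖y‖ * φ y := by ring
      _ ≤ ‖φ‖ - φ x + t * (‖φ‖ * t ^ (r.toReal - 1)) := by linarith
      _ < t * (ε / 2) + t * (ε / 2) := by gcongr; linarith
      _ = t * ε := by ring
  exact ((div_lt_iff₀ hynorm).1 (lt_of_mul_lt_mul_left this ht0.le)).le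

lemma continuous_toWeakSpace_lp (hr1 : 1 < r) (hr : r ≠ ∞) {T : Type*} [TopologicalSpace T]
    {C : ℝ} {f : T → lp E r} (hC : ∀ t, ‖f t‖ ≤ C)
    (hf : ∀ i, Continuous fun t => toWeakSpace ℝ (E i) (f t i)) :
    Continuous fun t => toWeakSpace ℝ (lp E r) (f t) := by
  classical
  have hr0 : 0 < r.toReal := ENNReal.toReal_pos (zero_lt_one.trans_le Fact.out).ne' hr
  refine continuous_toWeakSpace_comp_iff.2 fun φ => ?_
  have hunif : TendstoUniformly (fun (s : Finset ι) t => ∑ i ∈ s, φ (lp.single r i (f t i)))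
      (fun t => φ (f t)) atTop := by
    refine Metric.tendstoUniformly_iff.2 fun ε hε => ?_
    obtain ⟨s, hs⟩ := exists_finset_forall_norm_apply_le hr1 hr φ
      (show 0 < ε / (|C| + 1) by positivity)
    filter_upwards [eventually_ge_atTop s] with s' hs' t
    have hvanish (i : ι) (hi : i ∈ s) : (f t - ∑ j ∈ s', lp.single r j (f t j)) i = 0 := by
      rw [lp.coeFn_sub, Pi.sub_apply, lp_sum_single_apply, if_pos (hs' hi), sub_self]
    calc dist (φ (f t)) (∑ i ∈ s', φ (lp.single r i (f t i)))
        = ‖φ (f t - ∑ i ∈ s', lp.single r i (f t i))‖ := by rw [dist_eq_norm, map_sub, map_sum]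
      _ ≤ ε / (|C| + 1) * ‖f t‖ := by
        refine (hs _ hvanish).trans ?_
        gcongr
        exact norm_sub_sum_single_le hr0 _ _
      _ ≤ ε / (|C| + 1) * |C| := by gcongr; exact (hC t).trans (le_abs_self C)
      _ < ε := by rw [div_mul_eq_mul_div, div_lt_iff₀ (by positivity)]; nlinarith
  refine hunif.continuous (Frequently.of_forall fun s => continuous_finsetSum s fun i _ => ?_)
  exact continuous_toWeakSpace_comp_iff.1 (hf i) (φ ∘L lp.singleContinuousLinearMap ℝ E r i)

lemma isClosed_coordinates_closedBall_lp (hr : r ≠ ∞) (C : ℝ) :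
    IsClosed ((fun (x : lp E r) i => toWeakSpace ℝ (E i) (x i)) '' Metric.closedBall 0 C) := by
  classical
  have hr0 : 0 < r.toReal := ENNReal.toReal_pos (zero_lt_one.trans_le Fact.out).ne' hr
  have hpartial (s : Finset ι) : IsClosed {w : ∀ i, WeakSpace ℝ (E i) |
      ‖∑ i ∈ s, lp.single r i ((toWeakSpace ℝ (E i)).symm (w i))‖ ≤ C} := by
    have hball := isClosed_toWeakSpace_image
      (Metric.isClosed_closedBall (x := (0 : lp E r)) (ε := C)) (convex_closedBall 0 C)
    have hcont : Continuous fun w : ∀ i, WeakSpace ℝ (E i) =>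
        ∑ i ∈ s, WeakSpace.map (lp.singleContinuousLinearMap ℝ E r i) (w i) := by fun_prop
    convert hball.preimage hcont using 1
    ext w
    have hmap : ∑ i ∈ s, WeakSpace.map (lp.singleContinuousLinearMap ℝ E r i) (w i) =
        toWeakSpace ℝ (lp E r) (∑ i ∈ s, lp.single r i ((toWeakSpace ℝ (E i)).symm (w i))) :=
      (map_sum (toWeakSpace ℝ (lp E r)) _ s).symm
    rw [mem_preimage, hmap, (toWeakSpace ℝ (lp E r)).injective.mem_set_image,
      mem_closedBall_zero_iff, mem_ofPred_eq]
  convert isClosed_iInter hpartial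
  ext w
  rw [mem_iInter]
  refine Iff.trans (exists_congr fun x => ?_)
    (exists_coe_eq_and_norm_le_iff hr0 (x := fun i => (toWeakSpace ℝ (E i)).symm (w i)))
  rw [and_comm, mem_closedBall_zero_iff, funext_iff, funext_iff]
  rfl

lemma isWeaklyCompact_lp (hr1 : 1 < r) (hr : r ≠ ∞) {W : ∀ i, Set (E i)}
    (hW : ∀ i, IsWeaklyCompact (W i)) (C : ℝ) :
    IsWeaklyCompact {x : lp E r | (∀ i, x i ∈ W i) ∧ ‖x‖ ≤ C} := by
  let P : Set (∀ i, WeakSpace ℝ (E i)) := (univ.pi fun i => toWeakSpace ℝ (E i) '' W i) ∩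
    (fun (x : lp E r) i => toWeakSpace ℝ (E i) (x i)) '' Metric.closedBall 0 C
  have hP : CompactSpace P := isCompact_iff_compactSpace.1 <|
    (isCompact_univ_pi hW).inter_right (isClosed_coordinates_closedBall_lp hr C)
  choose y hyC hyw using fun w : P => w.2.2
  have hcont : Continuous fun w => toWeakSpace ℝ (lp E r) (y w) :=
    continuous_toWeakSpace_lp hr1 hr (fun w => mem_closedBall_zero_iff.1 (hyC w)) fun i =>
      ((continuous_apply i).comp continuous_subtype_val).congr fun w => (congrFun (hyw w) i).symm
  have hrange : range y = {x : lp E r | (∀ i, x i ∈ W i) ∧ ‖x‖ ≤ C} := by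
    refine subset_antisymm ?_ fun x hx => ?_
    · rintro _ ⟨w, rfl⟩
      refine ⟨fun i => ?_, mem_closedBall_zero_iff.1 (hyC w)⟩
      obtain ⟨z, hz, hzw⟩ := w.2.1 i (mem_univ i)
      rw [← congrFun (hyw w) i] at hzw
      exact (toWeakSpace ℝ (E i)).injective hzw ▸ hz
    · let w : P := ⟨fun i => toWeakSpace ℝ (E i) (x i),
        fun i _ => mem_image_of_mem _ (hx.1 i), x, mem_closedBall_zero_iff.2 hx.2, rfl⟩
      exact ⟨w, lp.ext (funext fun i => (toWeakSpace ℝ (E i)).injective (congrFun (hyw w) i))⟩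
  rw [IsWeaklyCompact, ← hrange, ← range_comp]
  exact isCompact_range hcont

end LpSum

section Schur

lemma IsRelWeaklyCompact.exists_subseq_tendsto {E : Type*} [NormedAddCommGroup E]
    [NormedSpace ℝ E] {K : Set E} (hK : IsRelWeaklyCompact K) {ξ : ℕ → StrongDual ℝ E}
    (hξ : ∀ x y, (∀ k, ξ k x = ξ k y) → x = y) {x : ℕ → E} (hx : ∀ n, x n ∈ K) :
    ∃ (a : E) (u : ℕ → ℕ), StrictMono u ∧
      ∀ φ : StrongDual ℝ E, Tendsto (fun n => φ (x (u n))) atTop (𝓝 (φ a)) := by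
  have heval (φ : StrongDual ℝ E) :
      Continuous fun w : WeakSpace ℝ E => φ ((toWeakSpace ℝ E).symm w) :=
    continuous_toWeakSpace_comp_iff.1 continuous_id φ
  let C := closure (toWeakSpace ℝ E '' K)
  have : CompactSpace C := isCompact_iff_compactSpace.1 hK
  have : TopologicalSpace.MetrizableSpace C :=
    Metric.PiNatEmbed.TopologicalSpace.MetrizableSpace.of_countable_separating
      (fun k (w : C) => ξ k ((toWeakSpace ℝ E).symm w))
      (fun k => (heval (ξ k)).comp continuous_subtype_val) fun w w' hne => by
        by_contra! h
        exact hne (Subtype.ext ((toWeakSpace ℝ E).symm.injective (hξ _ _ h)))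
  obtain ⟨a, u, hu, ha⟩ := CompactSpace.tendsto_subseq fun n =>
    (⟨toWeakSpace ℝ E (x n), subset_closure (mem_image_of_mem _ (hx n))⟩ : C)
  exact ⟨(toWeakSpace ℝ E).symm a, u, hu, fun φ =>
    (((heval φ).comp continuous_subtype_val).tendsto a).comp ha⟩

/-- The functional `x ↦ ∑ k, σ k * x k` on `ℓ¹` attached to a sequence of signs `σ`. -/
def signFunctional (σ : ℕ → SignType) : StrongDual ℝ ℓ¹(ℕ, ℝ) :=
  lp.tsumCLM ℝ ℕ ℝ ∘L lp.mapCLM 1 (fun k => ContinuousLinearMap.toSpanSingleton ℝ (σ k : ℝ))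
    zero_le_one fun k => by
      rw [ContinuousLinearMap.norm_toSpanSingleton]
      cases σ k <;> simp

lemma signFunctional_apply (σ : ℕ → SignType) (x : ℓ¹(ℕ, ℝ)) :
    signFunctional σ x = ∑' k, x k * (σ k : ℝ) :=
  rfl

lemma summable_abs_lp_one (x : ℓ¹(ℕ, ℝ)) : Summable fun k => |x k| := by
  simpa using (lp.memℓp x).summable (by simp)

lemma norm_mul_signType_cast_le (a : ℝ) (s : SignType) : ‖a * s‖ ≤ |a| := by
  cases s <;> simp

lemma continuous_signFunctional_apply (x : ℓ¹(ℕ, ℝ)) : Continuous fun σ => signFunctional σ x := by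
  simp only [signFunctional_apply]
  exact continuous_tsum (fun k => by fun_prop) (summable_abs_lp_one x)
    fun k σ => norm_mul_signType_cast_le (x k) (σ k)

lemma norm_le_signFunctional_add {σ : ℕ → SignType} {x : ℓ¹(ℕ, ℝ)} {J : ℕ}
    (hσ : ∀ k, J ≤ k → σ k = SignType.sign (x k)) :
    ‖x‖ ≤ signFunctional σ x + 2 * ∑ k ∈ Finset.range J, |x k| := by
  have hx : ‖x‖ = ∑' k, |x k| := by simpa using lp.norm_eq_tsum_rpow (by simp) x
  have htail (k : ℕ) : x (k + J) * (σ (k + J) : ℝ) = |x (k + J)| := by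
    rw [hσ _ (Nat.le_add_left J k), mul_comm, sign_mul_self]
  have hhead : -∑ k ∈ Finset.range J, |x k| ≤ ∑ k ∈ Finset.range J, x k * (σ k : ℝ) := by
    rw [← Finset.sum_neg_distrib]
    exact Finset.sum_le_sum fun k _ => neg_le_of_abs_le (norm_mul_signType_cast_le (x k) (σ k))
  have hsummable : Summable fun k => x k * (σ k : ℝ) :=
    .of_norm_bounded (summable_abs_lp_one x) fun k => norm_mul_signType_cast_le (x k) (σ k)
  rw [hx, signFunctional_apply, ← (summable_abs_lp_one x).sum_add_tsum_nat_add J,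
    ← hsummable.sum_add_tsum_nat_add J, tsum_congr htail]
  linarith

/- By Baire, the functionals of all sign sequences extending some finite pattern are small on `x n`
simultaneously for all large `n`; one of them computes `‖x n‖` up to finitely many coordinates. -/
lemma tendsto_norm_zero_of_weakly_null {x : ℕ → ℓ¹(ℕ, ℝ)}
    (hx : ∀ φ : StrongDual ℝ ℓ¹(ℕ, ℝ), Tendsto (fun n => φ (x n)) atTop (𝓝 0)) :
    Tendsto (fun n => ‖x n‖) atTop (𝓝 0) := by
  refine tendsto_order.2 ⟨fun a ha => .of_forall fun n => ha.trans_le (norm_nonneg _),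
    fun ε hε => ?_⟩
  let S (N : ℕ) : Set (ℕ → SignType) := {σ | ∀ n, N ≤ n → signFunctional σ (x n) ≤ ε / 2}
  have hclosed (N : ℕ) : IsClosed (S N) := by
    simp only [S, ofPred_forall]
    exact isClosed_iInter fun n => isClosed_iInter fun _ =>
      isClosed_le (continuous_signFunctional_apply (x n)) continuous_const
  have hcover : ⋃ N, S N = univ := eq_univ_of_forall fun σ => mem_iUnion.2 <|
    eventually_atTop.1 (((hx (signFunctional σ)).eventually_lt_const (half_pos hε)).mono
      fun _ => le_of_lt)
  obtain ⟨N, σ, hσ⟩ := nonempty_interior_of_iUnion_of_closed hclosed hcover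
  obtain ⟨_, ⟨τ, J, rfl⟩, -, hJ⟩ := (PiNat.isTopologicalBasis_cylinders _).exists_subset_of_mem_open
    hσ isOpen_interior
  have hcoord (k : ℕ) : Tendsto (fun n => x n k) atTop (𝓝 0) := hx (lp.evalCLM ℝ _ 1 k)
  have hhead : Tendsto (fun n => 2 * ∑ k ∈ Finset.range J, |x n k|) atTop (𝓝 0) := by
    simpa using (tendsto_finsetSum (Finset.range J) fun k _ => (hcoord k).abs).const_mul 2
  filter_upwards [hhead.eventually_lt_const (half_pos hε), eventually_ge_atTop N] with n hn hNn
  let ρ (k : ℕ) : SignType := if k < J then τ k else SignType.sign (x n k)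
  have hρ : ρ ∈ S N := interior_subset (hJ (PiNat.mem_cylinder_iff.2 fun k hk => if_pos hk))
  linarith [hρ n hNn, norm_le_signFunctional_add (σ := ρ) fun k hk => if_neg (not_lt.2 hk)]

lemma IsRelWeaklyCompact.eventually_forall_abs_apply_lt {K : Set ℓ¹(ℕ, ℝ)}
    (hK : IsRelWeaklyCompact K) {ε : ℝ} (hε : 0 < ε) :
    ∀ᶠ k in atTop, ∀ x ∈ K, |x k| < ε := by
  by_contra hfreq
  rw [not_eventually] at hfreq
  push Not at hfreq
  obtain ⟨v, hv, hvK⟩ := extraction_of_frequently_atTop hfreq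
  choose x hxK hx using hvK
  obtain ⟨a, u, hu, ha⟩ := hK.exists_subseq_tendsto
    (fun y z h => lp.ext (funext h)) (ξ := lp.evalCLM ℝ _ 1) hxK
  have hnorm : Tendsto (fun n => ‖x (u n) - a‖) atTop (𝓝 0) :=
    tendsto_norm_zero_of_weakly_null fun φ => by simpa using (ha φ).sub_const (φ a)
  have hcoord : Tendsto (fun n => |a (v (u n))|) atTop (𝓝 0) :=
    (summable_abs_lp_one a).tendsto_atTop_zero.comp (hv.comp hu).tendsto_atTop
  obtain ⟨n, hn⟩ := ((hnorm.add hcoord).eventually_lt_const (by simpa using hε)).exists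
  refine (hx (u n)).not_gt (lt_of_le_of_lt ?_ hn)
  calc |x (u n) (v (u n))| ≤ |(x (u n) - a) (v (u n))| + |a (v (u n))| := by
        simpa using abs_add_le (x (u n) (v (u n)) - a (v (u n))) (a (v (u n)))
    _ ≤ ‖x (u n) - a‖ + |a (v (u n))| := by
        gcongr
        exact lp.norm_apply_le_norm one_ne_zero (x (u n) - a) _

end Schur

section UniformIntegrability

lemma eventually_setLIntegral_iUnion_le {μ : Measure Ω} {A : ℕ → Set Ω} (hA : ∑' n, μ (A n) ≠ ∞)
    {g : Ω → ℝ≥0∞} (hg : ∫⁻ ω, g ω ∂μ ≠ ∞) {c : ℝ≥0∞} (hc : c ≠ 0) :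
    ∀ᶠ m in atTop, ∫⁻ ω in ⋃ j ≥ m, A j, g ω ∂μ ≤ c := by
  have htail : Tendsto (fun m => μ (⋃ j ≥ m, A j)) atTop (𝓝 0) := by
    refine tendsto_of_tendsto_of_tendsto_of_le_of_le tendsto_const_nhds
      (ENNReal.tendsto_sum_nat_add _ hA) (fun _ => zero_le) fun m => ?_
    rw [iUnion_ge_eq_iUnion_nat_add]
    exact measure_iUnion_le _
  exact (tendsto_setLIntegral_zero hg htail).eventually_le_const (pos_iff_ne_zero.2 hc)

lemma exists_strictMono_pairwise_disjoint_setLIntegral_le {μ : Measure Ω} {A : ℕ → Set Ω}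
    (hAm : ∀ n, MeasurableSet (A n)) (hA : ∑' n, μ (A n) ≠ ∞) {g : ℕ → Ω → ℝ≥0∞}
    (hg : ∀ n, ∫⁻ ω, g n ω ∂μ ≠ ∞) {c : ℝ≥0∞} (hc : c ≠ 0) :
    ∃ (u : ℕ → ℕ) (D : ℕ → Set Ω), StrictMono u ∧ (∀ k, MeasurableSet (D k)) ∧
      Pairwise (Function.onFun Disjoint D) ∧
      ∀ k, ∫⁻ ω in A (u k), g (u k) ω ∂μ ≤ ∫⁻ ω in D k, g (u k) ω ∂μ + c := by
  choose m hnm hm using fun n =>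
    ((eventually_gt_atTop n).and (eventually_setLIntegral_iUnion_le hA (hg n) hc)).exists
  let u (k : ℕ) : ℕ := m^[k] 0
  have hu_succ (k : ℕ) : u (k + 1) = m (u k) := Function.iterate_succ_apply' m k 0
  have hu : StrictMono u := strictMono_nat_of_lt_succ fun k => (hnm (u k)).trans_eq (hu_succ k).symm
  let B (k : ℕ) : Set Ω := ⋃ j ≥ u (k + 1), A j
  refine ⟨u, fun k => A (u k) \ B k, hu, fun k => (hAm _).diff ?_, ?_, fun k => ?_⟩
  · exact .biUnion (to_countable _) fun j _ => hAm j
  · refine (pairwise_disjoint_on _).2 fun k l hkl => disjoint_left.2 fun ω hk hl => hk.2 ?_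
    exact mem_biUnion (hu.monotone (Nat.succ_le_of_lt hkl)) hl.1
  · calc ∫⁻ ω in A (u k), g (u k) ω ∂μ
        ≤ ∫⁻ ω in A (u k) \ B k ∪ B k, g (u k) ω ∂μ := by
          rw [sdiff_union_self]
          exact lintegral_mono_set subset_union_left
      _ ≤ ∫⁻ ω in A (u k) \ B k, g (u k) ω ∂μ + ∫⁻ ω in B k, g (u k) ω ∂μ :=
          lintegral_union_le _ _ _
      _ ≤ ∫⁻ ω in A (u k) \ B k, g (u k) ω ∂μ + c := by
          gcongr
          simpa only [B, hu_succ] using hm (u k)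

/-- The operator `x ↦ (ψ i x)ᵢ` into `ℓ¹` defined by absolutely summable functionals `ψ i`. -/
def lpOneOfFunctionals {ι E : Type*} [NormedAddCommGroup E] [NormedSpace ℝ E]
    (ψ : ι → StrongDual ℝ E) (hψ : ∀ x, ∀ s : Finset ι, ∑ i ∈ s, |ψ i x| ≤ ‖x‖) :
    E →L[ℝ] ℓ¹(ι, ℝ) :=
  LinearMap.mkContinuous
    { toFun x := ⟨fun i => ψ i x, memℓp_gen' (C := ‖x‖) (by simpa using hψ x)⟩
      map_add' x y := lp.ext (funext fun i => map_add (ψ i) x y)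
      map_smul' c x := lp.ext (funext fun i => map_smul (ψ i) c x) } 1
    fun x => by
      rw [one_mul]
      exact lp.norm_le_of_forall_sum_le (by simp) (norm_nonneg x) (by simpa using hψ x)

variable {E : Type*} [NormedAddCommGroup E] {μ : Measure Ω}

lemma sum_setIntegral_norm_le (f : Lp E 1 μ) {D : ℕ → Set Ω} (hDm : ∀ k, MeasurableSet (D k))
    (hD : Pairwise (Function.onFun Disjoint D)) (s : Finset ℕ) :
    ∑ k ∈ s, ∫ ω in D k, ‖f ω‖ ∂μ ≤ ‖f‖ := by
  have hf : Integrable (fun ω => ‖f ω‖) μ := (L1.integrable_coeFn f).norm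
  rw [← integral_biUnion_finset s (fun k _ => hDm k) (hD.set_pairwise _) fun k _ => hf.integrableOn,
    L1.norm_eq_integral_norm]
  exact setIntegral_le_integral hf (.of_forall fun ω => norm_nonneg _)

variable [NormedSpace ℝ E] {K : Set (Lp E 1 μ)}

lemma norm_LpToLpRestrictCLM_one (f : Lp E 1 μ) (D : Set Ω) :
    ‖LpToLpRestrictCLM Ω E ℝ μ 1 D f‖ = ∫ ω in D, ‖f ω‖ ∂μ := by
  rw [L1.norm_eq_integral_norm]
  exact integral_congr_ae ((LpToLpRestrictCLM_coeFn ℝ D f).fun_comp norm)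

/- Norming functionals of the restrictions to the sets `D k` define an operator into `ℓ¹`. -/
lemma IsRelWeaklyCompact.tendsto_setIntegral_norm (hK : IsRelWeaklyCompact K)
    {f : ℕ → Lp E 1 μ} (hf : ∀ k, f k ∈ K) {D : ℕ → Set Ω} (hDm : ∀ k, MeasurableSet (D k))
    (hD : Pairwise (Function.onFun Disjoint D)) :
    Tendsto (fun k => ∫ ω in D k, ‖f k ω‖ ∂μ) atTop (𝓝 0) := by
  let R (k : ℕ) := LpToLpRestrictCLM Ω E ℝ μ 1 (D k)
  choose φ hφ hφf using fun k => exists_dual_vector'' ℝ (R k (f k))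
  have hψ (g : Lp E 1 μ) (s : Finset ℕ) : ∑ k ∈ s, |(φ k ∘L R k) g| ≤ ‖g‖ := by
    refine (Finset.sum_le_sum fun k _ => ?_).trans (sum_setIntegral_norm_le g hDm hD s)
    exact ((φ k).le_of_opNorm_le (hφ k) _).trans_eq
      ((one_mul _).trans (norm_LpToLpRestrictCLM_one g (D k)))
  have hsmall {ε : ℝ} (hε : 0 < ε) :=
    (hK.image (lpOneOfFunctionals (fun k => φ k ∘L R k) hψ)).eventually_forall_abs_apply_lt hε
  refine tendsto_order.2 ⟨fun a ha => .of_forall fun k => ha.trans_le (by positivity),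
    fun ε hε => (hsmall hε).mono fun k hk => ?_⟩
  have hk' : |φ k (R k (f k))| < ε := hk _ (mem_image_of_mem _ (hf k))
  rw [← norm_LpToLpRestrictCLM_one]
  simpa only [hφf, RCLike.ofReal_real_eq_id, id_eq, abs_norm] using hk'

lemma IsRelWeaklyCompact.exists_forall_setIntegral_le (hK : IsRelWeaklyCompact K) {ε : ℝ}
    (hε : 0 < ε) :
    ∃ δ : ℝ, 0 < δ ∧ ∀ f ∈ K, ∀ A : Set Ω, μ A ≤ ENNReal.ofReal δ →
      ∫ ω in A, ‖f ω‖ ∂μ ≤ ε := by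
  by_contra! hbad
  choose f hfK A hA hfA using fun n : ℕ => hbad ((1 / 2) ^ n) (by positivity)
  have hAfin (n : ℕ) : μ (A n) ≠ ∞ := ne_top_of_le_ne_top ofReal_ne_top (hA n)
  have hsum : ∑' n, μ (toMeasurable μ (A n)) ≠ ∞ := by
    refine ne_top_of_le_ne_top summable_geometric_two.tsum_ofReal_ne_top
      (ENNReal.tsum_le_tsum fun n => ?_)
    rw [measure_toMeasurable]
    exact hA n
  have hint (n : ℕ) : Integrable (f n) μ := L1.integrable_coeFn (f n)
  obtain ⟨u, D, -, hDm, hD, hAD⟩ := exists_strictMono_pairwise_disjoint_setLIntegral_le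
    (fun n => measurableSet_toMeasurable μ (A n)) hsum
    (fun n => (hasFiniteIntegral_iff_enorm.1 (hint n).2).ne)
    (ENNReal.ofReal_pos.2 (half_pos hε)).ne'
  obtain ⟨k, hk⟩ := ((hK.tendsto_setIntegral_norm (fun k => hfK (u k)) hDm hD).eventually_lt_const
    (half_pos hε)).exists
  have hADk := hAD k
  rw [Measure.restrict_toMeasurable (hAfin (u k)),
    ← ofReal_integral_norm_eq_lintegral_enorm (hint (u k)).integrableOn,
    ← ofReal_integral_norm_eq_lintegral_enorm (hint (u k)).integrableOn,
    ← ENNReal.ofReal_add (by positivity) (half_pos hε).le,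
    ENNReal.ofReal_le_ofReal_iff (by positivity)] at hADk
  linarith [hfA (u k)]

lemma IsRelWeaklyCompact.unifIntegrableSet (hK : IsRelWeaklyCompact K) : UnifIntegrableSet μ K :=
  ⟨hK.isBounded.exists_norm_le, fun _ => hK.exists_forall_setIntegral_le⟩

end UniformIntegrability

section Tightness

variable {E F : Type*} [NormedAddCommGroup E] [NormedAddCommGroup F] {μ : Measure Ω}

lemma exists_forall_measure_lt_norm_le {K : Set (Lp E 1 μ)} (hK : Bornology.IsBounded K) {δ : ℝ≥0}
    (hδ : 0 < δ) :
    ∃ R : ℝ, ∀ f ∈ K, μ {ω | R < ‖f ω‖} ≤ δ := by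
  obtain ⟨C, hC0, hC⟩ := hK.exists_pos_norm_le
  have hR : 0 < C / δ := by positivity
  refine ⟨C / δ, fun f hf => ?_⟩
  calc μ {ω | C / δ < ‖f ω‖}
      ≤ μ {ω | ENNReal.ofReal (C / δ) ≤ ‖f ω‖ₑ} := measure_mono fun ω hω => by
        rw [mem_ofPred_eq, ← ofReal_norm]
        exact ENNReal.ofReal_le_ofReal (le_of_lt hω)
    _ ≤ (∫⁻ ω, ‖f ω‖ₑ ∂μ) / ENNReal.ofReal (C / δ) :=
        meas_ge_le_lintegral_div (Lp.aestronglyMeasurable f).enorm (ENNReal.ofReal_pos.2 hR).ne'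
          ofReal_ne_top
    _ ≤ ENNReal.ofReal C / ENNReal.ofReal (C / δ) := by
        gcongr
        rw [← ofReal_integral_norm_eq_lintegral_enorm (L1.integrable_coeFn f),
          ← L1.norm_eq_integral_norm]
        exact ENNReal.ofReal_le_ofReal (hC f hf)
    _ = δ := by
        rw [← ENNReal.ofReal_div_of_pos hR, div_div_cancel₀ hC0.ne', ENNReal.ofReal_coe_nnreal]

variable [NormedSpace ℝ E] [NormedSpace ℝ F] [IsProbabilityMeasure μ]

lemma IsWeaklyCompact.one_sub_le_measure_preimage_iff {W : Set E} (hW : IsWeaklyCompact W)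
    (f : Lp E 1 μ) {δ : ℝ≥0∞} :
    1 - δ ≤ μ (f ⁻¹' W) ↔ μ {ω | f ω ∉ W} ≤ δ := by
  borelize E
  have hmeas : MeasurableSet (f ⁻¹' W) :=
    (Lp.stronglyMeasurable f).measurable hW.isClosed.measurableSet
  rw [tsub_le_iff_tsub_le, ← prob_compl_eq_one_sub hmeas]
  rfl

lemma DeltaSProp.exists_forall_measure_notMem_le (h : DeltaSProp μ F) {K : Set (Lp E 1 μ)}
    (hK : IsRelWeaklyCompact K) (T : E →L[ℝ] F) {δ : ℝ≥0} (hδ : 0 < δ) :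
    ∃ W : Set F, IsWeaklyCompact W ∧ ∀ f ∈ K, μ {ω | T (f ω) ∉ W} ≤ δ := by
  obtain ⟨W, hW, hWK⟩ := (h _ (hK.image (T.compLpL 1 μ))).2 δ hδ
  refine ⟨W, hW, fun f hf => ?_⟩
  have hTf := (hW.one_sub_le_measure_preimage_iff _).1 (hWK _ (mem_image_of_mem _ hf))
  rw [ENNReal.ofReal_coe_nnreal] at hTf
  refine (measure_congr ?_).trans_le hTf
  filter_upwards [T.coeFn_compLpL f] with ω hω
  exact congrArg (· ∉ W) hω.symm

variable {ι : Type*} [Countable ι] {X : ι → Type*} [∀ i, NormedAddCommGroup (X i)]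
  [∀ i, NormedSpace ℝ (X i)] {r : ℝ≥0∞} [Fact (1 ≤ r)]

lemma exists_isWeaklyCompact_forall_measure_notMem_le (hr1 : 1 < r) (hr2 : r ≠ ∞)
    (h : ∀ i, DeltaSProp μ (X i)) {K : Set (Lp (lp X r) 1 μ)} (hK : IsRelWeaklyCompact K)
    {δ : ℝ≥0} (hδ : 0 < δ) :
    ∃ W : Set (lp X r), IsWeaklyCompact W ∧ ∀ f ∈ K, μ {ω | f ω ∉ W} ≤ δ := by
  have hδ2 : 0 < δ / 2 := half_pos hδ
  obtain ⟨ε, hε, hεsum⟩ :=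
    ENNReal.exists_pos_sum_of_countable (ENNReal.coe_pos.2 hδ2).ne' ι
  choose W hW hWK using fun i =>
    (h i).exists_forall_measure_notMem_le hK (lp.evalCLM ℝ X r i) (hε i)
  obtain ⟨R, hR⟩ := exists_forall_measure_lt_norm_le hK.isBounded hδ2
  refine ⟨{x | (∀ i, x i ∈ W i) ∧ ‖x‖ ≤ R}, isWeaklyCompact_lp hr1 hr2 hW R, fun f hf => ?_⟩
  calc μ {ω | ¬((∀ i, f ω i ∈ W i) ∧ ‖f ω‖ ≤ R)}
      ≤ μ ((⋃ i, {ω | f ω i ∉ W i}) ∪ {ω | R < ‖f ω‖}) := measure_mono fun ω hω =>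
        (not_and_or.1 hω).imp (fun hi => mem_iUnion.2 (not_forall.1 hi)) not_le.1
    _ ≤ ∑' i, μ {ω | f ω i ∉ W i} + μ {ω | R < ‖f ω‖} :=
        (measure_union_le _ _).trans (by gcongr; exact measure_iUnion_le _)
    _ ≤ ∑' i, (ε i : ℝ≥0∞) + (δ / 2 : ℝ≥0) := by
        gcongr with i
        · exact hWK i f hf
        · exact hR f hf
    _ ≤ (δ / 2 : ℝ≥0) + (δ / 2 : ℝ≥0) := by gcongr
    _ = δ := by rw [← ENNReal.coe_add, add_halves]

end Tightness

theorem deltaSProp_lp_sum_general (μ : Measure Ω) [IsProbabilityMeasure μ] {ι : Type*} [Countable ι]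
    (X : ι → Type*) [∀ i, NormedAddCommGroup (X i)] [∀ i, NormedSpace ℝ (X i)]
    (r : ℝ≥0∞) [Fact (1 ≤ r)] (hr1 : 1 < r) (hr2 : r < ∞) (h : ∀ i, DeltaSProp μ (X i)) :
    DeltaSProp μ (lp X r) := by
  refine fun K hK => ⟨hK.unifIntegrableSet, fun δ hδ => ?_⟩
  obtain ⟨W, hW, hWK⟩ :=
    exists_isWeaklyCompact_forall_measure_notMem_le hr1 hr2.ne h hK (Real.toNNReal_pos.2 hδ)
  exact ⟨W, hW, fun f hf => (hW.one_sub_le_measure_preimage_iff f).2 (hWK f hf)⟩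

/-- If each `Xₙ` has property (δSμ) and `1 < r < ∞`, then the `ℓʳ`-sum `ℓʳ(Xₙ)` has
property (δSμ). -/
theorem deltaSProp_lp_sum (μ : Measure Ω) [IsProbabilityMeasure μ]
    (X : ℕ → Type*) [∀ n, NormedAddCommGroup (X n)] [∀ n, NormedSpace ℝ (X n)]
    [∀ n, CompleteSpace (X n)] (r : ℝ≥0∞) [Fact (1 ≤ r)] (hr1 : 1 < r) (hr2 : r < ∞)
    (h : ∀ n, DeltaSProp μ (X n)) :
    DeltaSProp μ (lp X r) :=
  deltaSProp_lp_sum_general μ X r hr1 hr2 h
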